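/- arXiv:1202.0932 — 2 statements merged into one kernel-verified Lean document; each statement's English description precedes it below -/
import Mathlib

section
/- Let p ≥ 1, n = 2p−1, and let μ = (1,2,…,p). Let σ₁ and σ₂ be bijections from [p−1] onto {p+1,…,2p−1}, and for a bijection σ from [p−1] onto {p+1,…,2p−1} let μ∘σ ∈ S_n denote the interleaved permutation (1, σ(1), 2, σ(2), …, p−1, σ(p−1), p). If σ₁ and σ₂ differ in at least d positions, i.e., |{k ∈ [p−1] : σ₁(k) ≠ σ₂(k)}| ≥ d, then the translocation distance satisfies d∘(μ∘σ₁, μ∘σ₂) ≥ ⌈2d/3⌉. -/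
/-- `IsMove l l'` holds if `l'` is obtained from `l` by a single translocation:
removing the element at position `i` and reinserting it at position `j`. -/
def IsMove {α : Type*} (l l' : List α) : Prop :=
  ∃ i j : Fin l.length, l' = (l.eraseIdx i).insertIdx j (l.get i)

/-- `ReachIn step m l l'` holds if `l'` can be obtained from `l` by `m` applications
of the relation `step`. -/
def ReachIn {α : Type*} (step : List α → List α → Prop) : ℕ → List α → List α → Prop
  | 0, l, l' => l = l'
  | m+1, l, l' => ∃ l'', step l l'' ∧ ReachIn step m l'' l'

/-- The one-line notation of a permutation of `Fin n`. -/
def oneLine {n : ℕ} (σ : Equiv.Perm (Fin n)) : List (Fin n) := List.ofFn σ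

/-- The translocation distance: the minimum number of translocations transforming
the one-line notation of `σ` into that of `π`. -/
noncomputable def translocDist {n : ℕ} (σ π : Equiv.Perm (Fin n)) : ℕ :=
  sInf {m | ReachIn IsMove m (oneLine σ) (oneLine π)}

lemma IsMove.cons' {α : Type*} (x : α) {l l' : List α} (h : IsMove l l') :
    IsMove (x :: l) (x :: l') := by
  obtain ⟨i, j, rfl⟩ := h
  refine ⟨i.succ, j.succ, ?_⟩
  simp

lemma ReachIn.cons' {α : Type*} (x : α) (m : ℕ) : ∀ {l l' : List α},
    ReachIn IsMove m l l' → ReachIn IsMove m (x :: l) (x :: l') := by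
  induction m with
  | zero => intro l l' h; simp only [ReachIn] at h ⊢; rw [h]
  | succ m ih =>
    rintro l l' ⟨l'', h1, h2⟩
    exact ⟨x :: l'', h1.cons' x, ih h2⟩

lemma ReachIn.trans' {α : Type*} {step : List α → List α → Prop} (k m : ℕ) :
    ∀ {l l' l'' : List α}, ReachIn step m l l' → ReachIn step k l' l'' →
      ReachIn step (m + k) l l'' := by
  induction m with
  | zero => intro l l' l'' h h'; simp only [ReachIn] at h; subst h; simpa using h'
  | succ m ih =>
    rintro l l' l'' ⟨l1, h1, h2⟩ h'
    rw [Nat.succ_add]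
    exact ⟨l1, h1, ih h2 h'⟩

lemma reach_of_perm {α : Type*} {l l' : List α} (h : l.Perm l') :
    ∃ m, ReachIn IsMove m l l' := by
  induction h with
  | nil => exact ⟨0, rfl⟩
  | cons x _ ih => obtain ⟨m, hm⟩ := ih; exact ⟨m, hm.cons' x m⟩
  | swap x y l =>
    refine ⟨1, _, ⟨⟨0, by simp⟩, ⟨1, by simp⟩, rfl⟩, ?_⟩
    simp [ReachIn]
  | trans _ _ ih1 ih2 =>
    obtain ⟨m, hm⟩ := ih1
    obtain ⟨k, hk⟩ := ih2
    exact ⟨m + k, hm.trans' k m hk⟩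

lemma filter_eraseIdx' {α : Type*} (q : α → Bool) : ∀ (l : List α) (i : ℕ) (h : i < l.length),
    q l[i] = false → (l.eraseIdx i).filter q = l.filter q
  | [], i, h, _ => by simp at h
  | a :: l, 0, h, hq => by simp at hq; simp [hq]
  | a :: l, i + 1, h, hq => by
    have := filter_eraseIdx' q l i (by simpa using h) (by simpa using hq)
    simp [List.filter_cons, this]

lemma filter_insertIdx' {α : Type*} (q : α → Bool) (x : α) (hx : q x = false) :
    ∀ (l : List α) (j : ℕ), (l.insertIdx j x).filter q = l.filter q
  | l, 0 => by simp [hx]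
  | [], j + 1 => by simp
  | a :: l, j + 1 => by
    have := filter_insertIdx' q x hx l j
    simp [List.filter_cons, this]

lemma reach_filter {α : Type*} [DecidableEq α] (m : ℕ) : ∀ {l l' : List α},
    ReachIn IsMove m l l' →
    ∃ M : Finset α, M.card ≤ m ∧ l.filter (fun x => x ∉ M) = l'.filter (fun x => x ∉ M) := by
  induction m with
  | zero => intro l l' h; simp only [ReachIn] at h; subst h; exact ⟨∅, by simp⟩
  | succ m ih =>
    rintro l l' ⟨l'', ⟨i, j, rfl⟩, h2⟩
    obtain ⟨M, hM, hf⟩ := ih h2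
    refine ⟨insert (l.get i) M, (Finset.card_insert_le _ _).trans (by omega), ?_⟩
    have e : ∀ t : List α, t.filter (fun x => x ∉ insert (l.get i) M) =
        (t.filter (fun x => x ∉ M)).filter (fun x => x ∉ insert (l.get i) M) := by
      intro t
      rw [List.filter_filter]
      apply List.filter_congr
      intro x _
      by_cases h : x ∈ M <;> simp [h]
    rw [e l', ← hf, ← e, filter_insertIdx' _ _ (by simp), filter_eraseIdx' _ _ _ i.2 (by simp)]

lemma comb (p : ℕ)
    (f₁ f₂ : Fin (p - 1) → Fin (2 * p - 1))
    (hf₁ : Function.Injective f₁ ∧ ∀ k, p ≤ (f₁ k : ℕ))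
    (hf₂ : Function.Injective f₂ ∧ ∀ k, p ≤ (f₂ k : ℕ))
    (σ₁ σ₂ : Equiv.Perm (Fin (2 * p - 1)))
    (e₁ : ∀ k (h : 2 * k < 2 * p - 1), (σ₁ ⟨2 * k, h⟩ : ℕ) = k)
    (e₂ : ∀ k (h : 2 * k < 2 * p - 1), (σ₂ ⟨2 * k, h⟩ : ℕ) = k)
    (o₁ : ∀ k : Fin (p - 1), σ₁ ⟨2 * k + 1, by omega⟩ = f₁ k)
    (o₂ : ∀ k : Fin (p - 1), σ₂ ⟨2 * k + 1, by omega⟩ = f₂ k)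
    (M : Finset (Fin (2 * p - 1)))
    (H : ∀ i j, i < j → σ₁ i ∉ M → σ₁ j ∉ M → σ₂.symm (σ₁ i) < σ₂.symm (σ₁ j)) :
    2 * (Finset.univ.filter fun k => f₁ k ≠ f₂ k).card ≤ 3 * M.card := by
  classical
  -- labels
  let L : ∀ k, 2 * k < 2 * p - 1 → Fin (2 * p - 1) := fun k h => ⟨k, by omega⟩
  have e₁' : ∀ k (h : 2 * k < 2 * p - 1), σ₁ ⟨2 * k, h⟩ = L k h := fun k h => Fin.ext (e₁ k h)
  have e₂' : ∀ k (h : 2 * k < 2 * p - 1), σ₂.symm (L k h) = ⟨2 * k, h⟩ := fun k h => by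
    rw [Equiv.symm_apply_eq]; exact Fin.ext (e₂ k h).symm
  have o₂' : ∀ k : Fin (p - 1), σ₂.symm (f₂ k) = ⟨2 * k + 1, by omega⟩ := fun k => by
    rw [Equiv.symm_apply_eq, o₂]
  have surj : ∀ (g f : Fin (p - 1) → Fin (2 * p - 1)) (σ : Equiv.Perm (Fin (2 * p - 1))),
      (∀ k, p ≤ (g k : ℕ)) →
      (∀ k (h : 2 * k < 2 * p - 1), (σ ⟨2 * k, h⟩ : ℕ) = k) →
      (∀ k : Fin (p - 1), σ ⟨2 * k + 1, by omega⟩ = f k) → ∀ k, ∃ k', g k = f k' := by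
    intro g f σ hg he ho k
    obtain ⟨j, hj⟩ := σ.surjective (g k)
    rcases Nat.even_or_odd' (j : ℕ) with ⟨c, hc | hc⟩
    · have h1 := he c (by omega)
      have h2 : j = ⟨2 * c, by omega⟩ := Fin.ext hc
      rw [← h2, hj] at h1
      have := hg k
      omega
    · refine ⟨⟨c, by omega⟩, ?_⟩
      rw [← ho, ← hj]
      congr 1
      exact Fin.ext hc
  -- comparison of a label and a high element
  have A : ∀ (c : ℕ) (h : 2 * c < 2 * p - 1) (k k' : Fin (p - 1)), f₁ k = f₂ k' → L c h ∉ M →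
      f₁ k ∉ M → (c ≤ (k : ℕ) ↔ c ≤ (k' : ℕ)) := by
    intro c h k k' hk hc hM
    by_cases hck : c ≤ (k : ℕ)
    · have := H ⟨2 * c, h⟩ ⟨2 * k + 1, by omega⟩ (by simp only [Fin.mk_lt_mk]; omega)
        (by rwa [e₁']) (by rwa [o₁])
      rw [e₁' c h, o₁, e₂' c h, hk, o₂', Fin.mk_lt_mk] at this
      omega
    · have := H ⟨2 * k + 1, by omega⟩ ⟨2 * c, h⟩ (by simp only [Fin.mk_lt_mk]; omega)
        (by rwa [o₁]) (by rwa [e₁'])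
      rw [e₁' c h, o₁, e₂' c h, hk, o₂', Fin.mk_lt_mk] at this
      omega
  have B : ∀ (k l k' l' : Fin (p - 1)), f₁ k = f₂ k' → f₁ l = f₂ l' → f₁ k ∉ M → f₁ l ∉ M →
      k < l → k' < l' := by
    intro k l k' l' hk hl hkM hlM hlt
    have := H ⟨2 * k + 1, by omega⟩ ⟨2 * l + 1, by omega⟩
      (by simp only [Fin.mk_lt_mk]; omega) (by rwa [o₁]) (by rwa [o₁])
    rw [o₁, o₁, hk, hl, o₂', o₂', Fin.mk_lt_mk] at this
    omega
  let Hi := M.filter (fun x : Fin (2 * p - 1) => p ≤ (x : ℕ))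
  let Lo := M.filter (fun x : Fin (2 * p - 1) => ¬ p ≤ (x : ℕ))
  have hcard : Hi.card + Lo.card = M.card :=
    Finset.card_filter_add_card_filter_not (s := M) (fun x : Fin (2 * p - 1) => p ≤ (x : ℕ))
  let D := Finset.univ.filter fun k => f₁ k ≠ f₂ k
  let A1 := Finset.univ.filter fun k => f₁ k ∈ M
  let A2 := Finset.univ.filter fun k => f₂ k ∈ M
  let B0 := Finset.univ.filter fun k : Fin (p - 1) => L k (by omega) ∈ M
  let B1 := Finset.univ.filter fun k : Fin (p - 1) => L (k + 1) (by omega) ∈ M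
  have hA1 : A1.card ≤ Hi.card := Finset.card_le_card_of_injOn f₁
    (fun k hk => by simp [A1] at hk; simp [Hi, hk, hf₁.2]) hf₁.1.injOn
  have hA2 : A2.card ≤ Hi.card := Finset.card_le_card_of_injOn f₂
    (fun k hk => by simp [A2] at hk; simp [Hi, hk, hf₂.2]) hf₂.1.injOn
  have hB0 : B0.card ≤ Lo.card := Finset.card_le_card_of_injOn
    (fun k : Fin (p - 1) => L k (by omega))
    (fun k hk => by simp [B0] at hk; simp [Lo, hk]; simp [L]; omega)
    (fun k _ l _ h => by simp [L] at h; omega)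
  have hB1 : B1.card ≤ Lo.card := Finset.card_le_card_of_injOn
    (fun k : Fin (p - 1) => L (k + 1) (by omega))
    (fun k hk => by simp [B1] at hk; simp [Lo, hk]; simp [L]; omega)
    (fun k _ l _ h => by simp [L] at h; omega)
  have I1 : D ⊆ A1 ∪ (B0 ∪ B1) := by
    intro k hk
    by_contra hn
    simp only [D, A1, B0, B1, Finset.mem_union, Finset.mem_filter, Finset.mem_univ, true_and,
      not_or] at hk hn
    obtain ⟨h1, h2, h3⟩ := hn
    obtain ⟨k', hk'⟩ := surj f₁ f₂ σ₂ hf₁.2 e₂ o₂ k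
    have a1 := A k (by omega) k k' hk' h2 h1
    have a2 := A (k + 1) (by omega) k k' hk' h3 h1
    have : k = k' := by omega
    subst this
    exact hk hk'
  have I2 : D ⊆ A1 ∪ (A2 ∪ B0) := by
    intro k hk
    by_contra hn
    simp only [D, A1, B0, A2, Finset.mem_union, Finset.mem_filter, Finset.mem_univ, true_and,
      not_or] at hk hn
    obtain ⟨h1, h2, h3⟩ := hn
    obtain ⟨k', hk'⟩ := surj f₁ f₂ σ₂ hf₁.2 e₂ o₂ k
    obtain ⟨l, hl⟩ := surj f₂ f₁ σ₁ hf₂.2 e₁ o₁ k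
    have a1 := A k (by omega) k k' hk' h3 h1
    have a2 := A k (by omega) l k hl.symm h3 (by rwa [← hl])
    have n1 : k ≠ k' := by rintro rfl; exact hk hk'
    have n2 : k ≠ l := by rintro rfl; exact hk hl.symm
    have := B k l k' k hk' hl.symm h1 (by rwa [← hl]) (by omega)
    omega
  have c1 := Finset.card_le_card I1
  have c2 := Finset.card_le_card I2
  have u1 := Finset.card_union_le A1 (B0 ∪ B1)
  have u2 := Finset.card_union_le B0 B1
  have u3 := Finset.card_union_le A1 (A2 ∪ B0)
  have u4 := Finset.card_union_le A2 B0
  change 2 * D.card ≤ _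
  omega

/-- Let `p ≥ 1`, `n = 2p−1`, and `μ = (1,2,…,p)`. Let `σ₁, σ₂` be bijections from
`[p−1]` onto `{p+1,…,2p−1}` (here: injective maps `Fin (p−1) → Fin (2p−1)` whose values
lie in the top `p−1` elements), and let `μ∘σᵢ ∈ S_n` be the interleaved permutation
`(1, σᵢ(1), 2, σᵢ(2), …, p−1, σᵢ(p−1), p)` (in 0-indexed form: even positions `2k`
hold `k`, odd positions `2k+1` hold `σᵢ(k)`). If `σ₁` and `σ₂` differ in at least `d`
positions, then `d∘(μ∘σ₁, μ∘σ₂) ≥ ⌈2d/3⌉`. -/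
theorem interleave_identity_translocDist (p : ℕ) (hp : 1 ≤ p) (d : ℕ)
    (f₁ f₂ : Fin (p - 1) → Fin (2 * p - 1))
    (hf₁ : Function.Injective f₁ ∧ ∀ k, p ≤ (f₁ k : ℕ))
    (hf₂ : Function.Injective f₂ ∧ ∀ k, p ≤ (f₂ k : ℕ))
    (σ₁ σ₂ : Equiv.Perm (Fin (2 * p - 1)))
    (hσ₁ : ∀ j : Fin (2 * p - 1), σ₁ j =
      if h : (j : ℕ) % 2 = 0 then ⟨(j : ℕ) / 2, by have := j.isLt; omega⟩
      else f₁ ⟨(j : ℕ) / 2, by have := j.isLt; omega⟩)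
    (hσ₂ : ∀ j : Fin (2 * p - 1), σ₂ j =
      if h : (j : ℕ) % 2 = 0 then ⟨(j : ℕ) / 2, by have := j.isLt; omega⟩
      else f₂ ⟨(j : ℕ) / 2, by have := j.isLt; omega⟩)
    (hd : d ≤ (Finset.univ.filter fun k => f₁ k ≠ f₂ k).card) :
    (2 * d + 2) / 3 ≤ translocDist σ₁ σ₂ := by

  have hne : {m | ReachIn IsMove m (oneLine σ₁) (oneLine σ₂)}.Nonempty := by
    apply reach_of_perm
    unfold oneLine
    have h : (σ₁ : Fin (2 * p - 1) → Fin (2 * p - 1)) = σ₂ ∘ (σ₁.trans σ₂.symm) := by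
      ext x; simp
    rw [h]
    exact Equiv.Perm.ofFn_comp_perm _ _
  have hm := Nat.sInf_mem hne
  change ReachIn IsMove (translocDist σ₁ σ₂) _ _ at hm
  obtain ⟨M, hM, hf⟩ := reach_filter _ hm
  have hP : (oneLine σ₂).Pairwise (fun a b => σ₂.symm a < σ₂.symm b) := by
    unfold oneLine
    rw [List.pairwise_ofFn]
    intro i j h
    simpa using h
  have hP' := hP.filter (fun x => x ∉ M)
  rw [← hf, List.pairwise_filter, oneLine, List.pairwise_ofFn] at hP'
  have key := comb p f₁ f₂ hf₁ hf₂ σ₁ σ₂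
    (fun k h => by rw [hσ₁]; simp) (fun k h => by rw [hσ₂]; simp)
    (fun k => by
      rw [hσ₁, dif_neg (by simp only []; omega)]; congr 1; apply Fin.ext; simp only []; omega)
    (fun k => by
      rw [hσ₂, dif_neg (by simp only []; omega)]; congr 1; apply Fin.ext; simp only []; omega)
    M (fun i j hij h1 h2 => hP' hij (by simpa using h1) (by simpa using h2))
  omega
end

section
/- For every n ≥ 1, all permutations σ, π ∈ S_n, and every subset P ⊆ [n] with complement Q = [n] \ P, we have d∘(σ,π) ≥ (|P| − l(σ_P,π_P)) + (|Q| − l(σ_Q,π_Q)); equivalently, l(σ,π) ≤ l(σ_P,π_P) + l(σ_Q,π_Q). -/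
/-- The length of the longest common subsequence of two lists. -/
noncomputable def lcsLen {α : Type*} (l₁ l₂ : List α) : ℕ :=
  sSup {m | ∃ w : List α, w.length = m ∧ w.Sublist l₁ ∧ w.Sublist l₂}

theorem sublist_inter {α : Type*} : ∀ (L u w : List α), u.Sublist L → w.Sublist L →
    ∃ v : List α, v.Sublist u ∧ v.Sublist w ∧ u.length + w.length ≤ v.length + L.length
  | [], u, w, hu, hw => by
    have h1 := hu.length_le
    have h2 := hw.length_le
    exact ⟨[], by simp, by simp, by simp at *; simp [hu, hw]⟩
  | a :: L, u, w, hu, hw => by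
    cases hu with
    | cons _ hu =>
      cases hw with
      | cons _ hw =>
        obtain ⟨v, h1, h2, h3⟩ := sublist_inter L _ _ hu hw
        exact ⟨v, h1, h2, by simp; omega⟩
      | cons_cons _ hw =>
        obtain ⟨v, h1, h2, h3⟩ := sublist_inter L _ _ hu hw
        exact ⟨v, h1, h2.cons _, by simp; omega⟩
    | cons_cons _ hu =>
      cases hw with
      | cons _ hw =>
        obtain ⟨v, h1, h2, h3⟩ := sublist_inter L _ _ hu hw
        exact ⟨v, h1.cons _, h2, by simp; omega⟩
      | cons_cons _ hw =>
        obtain ⟨v, h1, h2, h3⟩ := sublist_inter L _ _ hu hw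
        exact ⟨a :: v, h1.cons_cons _, h2.cons_cons _, by simp; omega⟩

theorem sublist_insertIdx_self {α : Type*} (a : α) : ∀ (l : List α) (i : ℕ),
    l.Sublist (l.insertIdx i a)
  | l, 0 => by simp
  | [], i + 1 => by simp
  | b :: l, i + 1 => by
    rw [List.insertIdx_succ_cons]
    exact (sublist_insertIdx_self a l i).cons_cons _

theorem reach_common {α : Type*} : ∀ (m : ℕ) (l l' : List α), ReachIn IsMove m l l' →
    ∃ w : List α, w.Sublist l ∧ w.Sublist l' ∧ l.length ≤ w.length + m
  | 0, l, l', h => by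
    have h : l = l' := h
    subst h
    exact ⟨l, List.Sublist.refl _, List.Sublist.refl _, by simp⟩
  | m + 1, l, l', h => by
    obtain ⟨l'', ⟨i, j, hs⟩, h⟩ := h
    obtain ⟨w, h1, h2, h3⟩ := reach_common m l'' l' h
    have hi := i.2
    have hj := j.2
    have he : (l.eraseIdx i).length = l.length - 1 := List.length_eraseIdx_of_lt hi
    have hlen : l''.length = l.length := by
      rw [hs, List.length_insertIdx_of_le_length (by omega)]
      omega
    have hu : (l.eraseIdx i).Sublist l'' := by
      rw [hs]; exact sublist_insertIdx_self _ _ _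
    obtain ⟨v, k1, k2, k3⟩ := sublist_inter l'' _ _ hu h1
    exact ⟨v, k1.trans (List.eraseIdx_sublist _ _), k2.trans h2, by omega⟩

theorem reachIn_trans {α : Type*} {step : List α → List α → Prop} : ∀ (m k : ℕ) (a b c : List α),
    ReachIn step m a b → ReachIn step k b c → ∃ r, ReachIn step r a c
  | 0, k, a, b, c, h, h' => by
    have h : a = b := h
    subst h
    exact ⟨k, h'⟩
  | m + 1, k, a, b, c, h, h' => by
    obtain ⟨d, hd, h⟩ := h
    obtain ⟨r, hr⟩ := reachIn_trans m k d b c h h'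
    exact ⟨r + 1, d, hd, hr⟩

theorem reachIn_cons {α : Type*} (x : α) : ∀ (m : ℕ) (a b : List α),
    ReachIn IsMove m a b → ReachIn IsMove m (x :: a) (x :: b)
  | 0, a, b, h => by
    have h : a = b := h
    subst h
    rfl
  | m + 1, a, b, h => by
    obtain ⟨d, ⟨i, j, hd⟩, h⟩ := h
    refine ⟨x :: d, ⟨i.succ, j.succ, ?_⟩, reachIn_cons x m d b h⟩
    subst hd
    simp

theorem reachIn_of_perm {α : Type*} {a b : List α} (h : a.Perm b) :
    ∃ m, ReachIn IsMove m a b := by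
  induction h with
  | nil => exact ⟨0, rfl⟩
  | cons x _ ih =>
    obtain ⟨m, hm⟩ := ih
    exact ⟨m, reachIn_cons x _ _ _ hm⟩
  | swap x y l =>
    refine ⟨1, x :: y :: l, ⟨⟨0, by simp⟩, ⟨1, by simp⟩, ?_⟩, rfl⟩
    simp
  | trans _ _ ih1 ih2 =>
    obtain ⟨m, hm⟩ := ih1
    obtain ⟨k, hk⟩ := ih2
    exact reachIn_trans _ _ _ _ _ hm hk

theorem le_lcsLen {α : Type*} {w a b : List α} (h1 : w.Sublist a) (h2 : w.Sublist b) :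
    w.length ≤ lcsLen a b := by
  refine le_csSup ⟨a.length, ?_⟩ ⟨w, rfl, h1, h2⟩
  rintro m ⟨v, rfl, h, _⟩
  exact h.length_le

theorem oneLine_nodup {n : ℕ} (σ : Equiv.Perm (Fin n)) : (oneLine σ).Nodup :=
  List.nodup_ofFn.2 σ.injective

theorem mem_oneLine {n : ℕ} (σ : Equiv.Perm (Fin n)) (x : Fin n) : x ∈ oneLine σ := by
  rw [oneLine, List.mem_ofFn]
  exact σ.surjective x

theorem filter_length_le {n : ℕ} (w : List (Fin n)) (hw : w.Nodup) (P : Finset (Fin n)) :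
    (w.filter fun x => decide (x ∈ P)).length ≤ P.card := by
  rw [← List.toFinset_card_of_nodup (hw.filter _)]
  apply Finset.card_le_card
  intro x hx
  simp at hx
  exact hx.2

/-- For every `n ≥ 1`, all `σ, π ∈ S_n`, and every subset `P ⊆ [n]` with complement
`Q`, we have `d∘(σ,π) ≥ (|P| − l(σ_P,π_P)) + (|Q| − l(σ_Q,π_Q))`, where `σ_P` denotes
the projection of the one-line notation of `σ` onto `P`. -/
theorem translocDist_ge_projections (n : ℕ) (hn : 1 ≤ n) (σ π : Equiv.Perm (Fin n))
    (P : Finset (Fin n)) :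
    (P.card - lcsLen ((oneLine σ).filter fun x => decide (x ∈ P))
        ((oneLine π).filter fun x => decide (x ∈ P))) +
      (Pᶜ.card - lcsLen ((oneLine σ).filter fun x => decide (x ∈ Pᶜ))
        ((oneLine π).filter fun x => decide (x ∈ Pᶜ))) ≤
      translocDist σ π := by
  have hne : {m | ReachIn IsMove m (oneLine σ) (oneLine π)}.Nonempty := by
    apply reachIn_of_perm
    rw [List.perm_ext_iff_of_nodup (oneLine_nodup σ) (oneLine_nodup π)]
    intro x
    simp [mem_oneLine]
  have hm : ReachIn IsMove (translocDist σ π) (oneLine σ) (oneLine π) := Nat.sInf_mem hne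
  obtain ⟨w, h1, h2, h3⟩ := reach_common _ _ _ hm
  have hw : w.Nodup := (oneLine_nodup σ).sublist h1
  have a1 := filter_length_le w hw P
  have a2 := filter_length_le w hw Pᶜ
  have b1 := le_lcsLen (h1.filter fun x => decide (x ∈ P)) (h2.filter fun x => decide (x ∈ P))
  have b2 := le_lcsLen (h1.filter fun x => decide (x ∈ Pᶜ)) (h2.filter fun x => decide (x ∈ Pᶜ))
  have c : w.length = (w.filter fun x => decide (x ∈ P)).length +
      (w.filter fun x => decide (x ∈ Pᶜ)).length := by
    rw [List.length_eq_length_filter_add (fun x => decide (x ∈ P))]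
    simp
  have d := Finset.card_add_card_compl P
  have e : (oneLine σ).length = n := by simp [oneLine]
  rw [Fintype.card_fin] at d
  omega
end
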